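/- Let X_1, …, X_n be random variables in a sub-linear expectation space with ℰ[X_k] ≤ 0 for each k, which are upper extended negatively dependent under the conjugate expectation ℰ with dominating constant K ≥ 1 (i.e., ℰ[∏_{i=1}^n g_i(X_i)] ≤ K·∏_{i=1}^n ℰ[g_i(X_i)] for all non-negative bounded Lipschitz non-decreasing g_i). Set S_n = Σ_{k=1}^n X_k and B_n = Σ_{k=1}^n 𝔼[X_k²]. Then: (a) for all x, y > 0, 𝓋(S_n ≥ x) ≤ 𝕍(max_{k≤n} X_k ≥ y) + K·exp{ −x²/(2(xy + B_n)) · (1 + (2/3)·ln(1 + xy/B_n)) }; and (c) for all x > 0, 𝓋(S_n ≥ x) ≤ (1 + K·e)·B_n/x². -/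

import Mathlib

open Filter MeasureTheory
open scoped ENNReal NNReal

noncomputable section

/-- A sub-linear expectation on `Ω`: a monotone, constant-preserving, sub-additive,
positively homogeneous functional on real random variables (with values in the
extended reals, so that random variables without a finite expectation are allowed). -/
structure SublinearExp (Ω : Type) where
  E : (Ω → ℝ) → EReal
  mono : ∀ X Y : Ω → ℝ, (∀ ω, X ω ≤ Y ω) → E X ≤ E Y
  const_eq : ∀ c : ℝ, E (fun _ => c) = (c : EReal)
  subadd : ∀ X Y : Ω → ℝ, E (fun ω => X ω + Y ω) ≤ E X + E Y
  pos_homog : ∀ lam : ℝ, 0 ≤ lam → ∀ X : Ω → ℝ,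
    E (fun ω => lam * X ω) = (lam : EReal) * E X

namespace SublinearExp

variable {Ω : Type}

/-- The conjugate expectation `ℰ[X] := −𝔼[−X]`. -/
def cE (SL : SublinearExp Ω) (X : Ω → ℝ) : EReal := - SL.E fun ω => - X ω

/-- The upper capacity `𝕍(A) := inf{𝔼[ξ] : 1_A ≤ ξ}`. -/
def V (SL : SublinearExp Ω) (A : Set Ω) : ℝ :=
  sInf {x : ℝ | ∃ ξ : Ω → ℝ,
    (∀ ω, A.indicator (fun _ => (1 : ℝ)) ω ≤ ξ ω) ∧ SL.E ξ = (x : EReal)}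

/-- The lower capacity `𝓋(A) := 1 − 𝕍(Aᶜ)`. -/
def vLow (SL : SublinearExp Ω) (A : Set Ω) : ℝ := 1 - SL.V Aᶜ

/-- The Choquet integral `C_𝕍(X) := ∫₀^∞ 𝕍(X ≥ t) dt` (of a non-negative r.v.). -/
def Choquet (SL : SublinearExp Ω) (X : Ω → ℝ) : ℝ≥0∞ :=
  ∫⁻ t in Set.Ioi (0 : ℝ), ENNReal.ofReal (SL.V {ω | t ≤ X ω})

/-- The outer capacity `𝕍*(A) := inf{Σ_n 𝕍(A_n) : A ⊆ ∪_n A_n}`. -/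
def Vout (SL : SublinearExp Ω) (A : Set Ω) : ℝ≥0∞ :=
  ⨅ (B : ℕ → Set Ω) (_ : A ⊆ ⋃ n, B n), ∑' n, ENNReal.ofReal (SL.V (B n))

/-- The upper capacity is continuous: continuous from below and from above. -/
def ContinuousCapacity (SL : SublinearExp Ω) : Prop :=
  (∀ A : ℕ → Set Ω, Monotone A →
    Tendsto (fun n => SL.V (A n)) atTop (nhds (SL.V (⋃ n, A n)))) ∧
  (∀ A : ℕ → Set Ω, Antitone A →
    Tendsto (fun n => SL.V (A n)) atTop (nhds (SL.V (⋂ n, A n))))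

/-- Bounded Lipschitz function on ℝ. -/
def IsBLip (g : ℝ → ℝ) : Prop :=
  (∃ L : NNReal, LipschitzWith L g) ∧ ∃ M : ℝ, ∀ x, |g x| ≤ M

/-- Local Lipschitz function on ℝ: `|φ(x) − φ(y)| ≤ C(1+|x|^m+|y|^m)|x−y|`. -/
def IsLocLip (φ : ℝ → ℝ) : Prop :=
  ∃ (C : ℝ) (m : ℕ), ∀ x y : ℝ, |φ x - φ y| ≤ C * (1 + |x| ^ m + |y| ^ m) * |x - y|

/-- Upper extended negative dependence (finite family) with dominating constant `K`:
`𝔼[∏ g_i(X_i)] ≤ K ∏ 𝔼[g_i(X_i)]` for all non-negative bounded Lipschitz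
non-decreasing `g_i`.  (Expectations of bounded functions are finite, whence
the `toReal`.) -/
def UENDFin (SL : SublinearExp Ω) (K : ℝ) {n : ℕ} (X : Fin n → Ω → ℝ) : Prop :=
  ∀ g : Fin n → ℝ → ℝ, (∀ i, IsBLip (g i)) → (∀ i, Monotone (g i)) →
    (∀ i x, 0 ≤ g i x) →
    SL.E (fun ω => ∏ i, g i (X i ω)) ≤
      ((K * ∏ i, (SL.E fun ω => g i (X i ω)).toReal : ℝ) : EReal)

/-- Upper extended negative dependence for a sequence. -/
def UEND (SL : SublinearExp Ω) (K : ℝ) (X : ℕ → Ω → ℝ) : Prop :=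
  ∀ n : ℕ, ∀ g : ℕ → ℝ → ℝ, (∀ i, IsBLip (g i)) → (∀ i, Monotone (g i)) →
    (∀ i x, 0 ≤ g i x) →
    SL.E (fun ω => ∏ i ∈ Finset.range n, g i (X i ω)) ≤
      ((K * ∏ i ∈ Finset.range n, (SL.E fun ω => g i (X i ω)).toReal : ℝ) : EReal)

/-- Lower extended negative dependence for a sequence. -/
def LEND (SL : SublinearExp Ω) (K : ℝ) (X : ℕ → Ω → ℝ) : Prop :=
  ∀ n : ℕ, ∀ g : ℕ → ℝ → ℝ, (∀ i, IsBLip (g i)) → (∀ i, Antitone (g i)) →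
    (∀ i x, 0 ≤ g i x) →
    SL.E (fun ω => ∏ i ∈ Finset.range n, g i (X i ω)) ≤
      ((K * ∏ i ∈ Finset.range n, (SL.E fun ω => g i (X i ω)).toReal : ℝ) : EReal)

/-- Extended negative dependence = upper and lower END. -/
def END (SL : SublinearExp Ω) (K : ℝ) (X : ℕ → Ω → ℝ) : Prop :=
  UEND SL K X ∧ LEND SL K X

/-- Upper extended negative dependence under the conjugate expectation `ℰ`
(finite family). -/
def UENDFinConj (SL : SublinearExp Ω) (K : ℝ) {n : ℕ} (X : Fin n → Ω → ℝ) : Prop :=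
  ∀ g : Fin n → ℝ → ℝ, (∀ i, IsBLip (g i)) → (∀ i, Monotone (g i)) →
    (∀ i x, 0 ≤ g i x) →
    SL.cE (fun ω => ∏ i, g i (X i ω)) ≤
      ((K * ∏ i, (SL.cE fun ω => g i (X i ω)).toReal : ℝ) : EReal)

/-- Upper extended negative dependence under the conjugate expectation (sequence). -/
def UENDconj (SL : SublinearExp Ω) (K : ℝ) (X : ℕ → Ω → ℝ) : Prop :=
  ∀ n : ℕ, ∀ g : ℕ → ℝ → ℝ, (∀ i, IsBLip (g i)) → (∀ i, Monotone (g i)) →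
    (∀ i x, 0 ≤ g i x) →
    SL.cE (fun ω => ∏ i ∈ Finset.range n, g i (X i ω)) ≤
      ((K * ∏ i ∈ Finset.range n, (SL.cE fun ω => g i (X i ω)).toReal : ℝ) : EReal)

/-- Lower extended negative dependence under the conjugate expectation (sequence). -/
def LENDconj (SL : SublinearExp Ω) (K : ℝ) (X : ℕ → Ω → ℝ) : Prop :=
  ∀ n : ℕ, ∀ g : ℕ → ℝ → ℝ, (∀ i, IsBLip (g i)) → (∀ i, Antitone (g i)) →
    (∀ i x, 0 ≤ g i x) →
    SL.cE (fun ω => ∏ i ∈ Finset.range n, g i (X i ω)) ≤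
      ((K * ∏ i ∈ Finset.range n, (SL.cE fun ω => g i (X i ω)).toReal : ℝ) : EReal)

/-- Extended negative dependence under the conjugate expectation. -/
def ENDconj (SL : SublinearExp Ω) (K : ℝ) (X : ℕ → Ω → ℝ) : Prop :=
  UENDconj SL K X ∧ LENDconj SL K X

/-- Extended independence of a sequence:
`𝔼[∏ ψ_i(X_i)] = ∏ 𝔼[ψ_i(X_i)]` for non-negative local Lipschitz `ψ_i`,
whenever the expectations involved are finite. -/
def ExtIndep (SL : SublinearExp Ω) (X : ℕ → Ω → ℝ) : Prop :=
  ∀ n : ℕ, ∀ ψ : ℕ → ℝ → ℝ, (∀ i, IsLocLip (ψ i)) → (∀ i x, 0 ≤ ψ i x) →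
    (∀ i ∈ Finset.range n, SL.E (fun ω => ψ i (X i ω)) ≠ ⊤) →
    SL.E (fun ω => ∏ i ∈ Finset.range n, ψ i (X i ω)) =
      ((∏ i ∈ Finset.range n, (SL.E fun ω => ψ i (X i ω)).toReal : ℝ) : EReal)

/-- Extended independence of two random variables. -/
def ExtIndepPair (SL : SublinearExp Ω) (Y Z : Ω → ℝ) : Prop :=
  ∀ ψ₁ ψ₂ : ℝ → ℝ, IsLocLip ψ₁ → IsLocLip ψ₂ →
    (∀ x, 0 ≤ ψ₁ x) → (∀ x, 0 ≤ ψ₂ x) →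
    SL.E (fun ω => ψ₁ (Y ω)) ≠ ⊤ → SL.E (fun ω => ψ₂ (Z ω)) ≠ ⊤ →
    SL.E (fun ω => ψ₁ (Y ω) * ψ₂ (Z ω)) =
      (((SL.E fun ω => ψ₁ (Y ω)).toReal * (SL.E fun ω => ψ₂ (Z ω)).toReal : ℝ) : EReal)

/-- Identically distributed: `𝔼[φ(X_i)] = 𝔼[φ(X_1)]` for all local Lipschitz `φ`. -/
def IdentDist (SL : SublinearExp Ω) (X : ℕ → Ω → ℝ) : Prop :=
  ∀ (i : ℕ) (φ : ℝ → ℝ), IsLocLip φ →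
    SL.E (fun ω => φ (X i ω)) = SL.E fun ω => φ (X 0 ω)

end SublinearExp

/-- `log x = ln(x ∨ e)`. -/
def paperLog (x : ℝ) : ℝ := Real.log (max x (Real.exp 1))

/-- `a_n = √(2 n log log n)` with the above convention for `log`. -/
def lilA (n : ℕ) : ℝ := Real.sqrt (2 * n * paperLog (paperLog n))

/-!
On `{S_n ≥ x}` either some `X_k` exceeds `y`, or `S_n` agrees with the sum of the truncations
`min X_k y`. Since `ℰ[X + Y] ≤ ℰ[X] + 𝔼[Y]`, the lower capacity of the first alternative costs at
most `𝕍(max X_k ≥ y)`, and the second is handled by a Chernoff bound: the truncated exponentials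
`t ↦ exp (l * min t y)` are bounded, Lipschitz and non-decreasing, so negative dependence bounds
`ℰ[∏ exp (l * min X_k y)]` by a product, and each factor is controlled by the second moment because
`(exp s - 1 - s) / s ^ 2` increases in `s`. Optimizing in `l` gives Bennett's inequality; (a) and
(c) follow from two lower bounds for Bennett's function, (c) with `y = x`.
-/

section RealInequalities

open Real

lemma exp_le_quadratic_of_nonpos {s : ℝ} (hs : s ≤ 0) : exp s ≤ 1 + s + s ^ 2 / 2 := by
  have hnonneg : 0 ≤ 1 + s + s ^ 2 / 2 := by nlinarith [sq_nonneg (s + 1)]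
  refine le_of_mul_le_mul_right ?_ (exp_pos (-s))
  calc exp s * exp (-s) = 1 := by rw [← exp_add, add_neg_cancel, exp_zero]
    _ ≤ 1 + (s ^ 2) ^ 2 / 4 := le_add_of_nonneg_right (by positivity)
    _ = (1 + s + s ^ 2 / 2) * (1 + -s + (-s) ^ 2 / 2) := by ring
    _ ≤ (1 + s + s ^ 2 / 2) * exp (-s) :=
      mul_le_mul_of_nonneg_left (quadratic_le_exp_of_nonneg (neg_nonneg.2 hs)) hnonneg

lemma hasSum_exp_sub_one_sub_self (s : ℝ) :
    HasSum (fun k : ℕ => s ^ (k + 2) / (k + 2).factorial) (exp s - 1 - s) := by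
  have h : HasSum (fun k : ℕ => s ^ k / k.factorial) (exp s) := by
    simpa only [exp_eq_exp_ℝ] using NormedSpace.expSeries_div_hasSum_exp s
  simpa [Finset.sum_range_succ, sub_sub] using (hasSum_nat_add_iff' 2).2 h

lemma exp_le_one_add_add_mul_sq {s t : ℝ} (ht : 0 < t) (hst : s ≤ t) :
    exp s ≤ 1 + s + (exp t - 1 - t) / t ^ 2 * s ^ 2 := by
  rcases le_total s 0 with hs | hs
  · have hcoef : 1 / 2 ≤ (exp t - 1 - t) / t ^ 2 := by
      rw [le_div_iff₀ (by positivity)]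
      linarith [quadratic_le_exp_of_nonneg ht.le]
    linarith [exp_le_quadratic_of_nonpos hs, mul_le_mul_of_nonneg_right hcoef (sq_nonneg s)]
  · have hterm (k : ℕ) : s ^ (k + 2) / (k + 2).factorial ≤
        s ^ 2 / t ^ 2 * (t ^ (k + 2) / (k + 2).factorial) :=
      calc s ^ (k + 2) / (k + 2).factorial = s ^ k * s ^ 2 / (k + 2).factorial := by rw [pow_add]
        _ ≤ t ^ k * s ^ 2 / (k + 2).factorial := by gcongr
        _ = s ^ 2 / t ^ 2 * (t ^ (k + 2) / (k + 2).factorial) := by rw [pow_add]; field_simp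
    have hsum := hasSum_le hterm (hasSum_exp_sub_one_sub_self s)
      ((hasSum_exp_sub_one_sub_self t).mul_left (s ^ 2 / t ^ 2))
    rw [div_mul_comm] at hsum
    linarith

lemma exp_sub_one_sub_self_div_sq_nonneg (s t : ℝ) : 0 ≤ (exp s - 1 - s) / t ^ 2 :=
  div_nonneg (by linarith [add_one_le_exp s]) (sq_nonneg t)

lemma exp_mul_min_le {l y : ℝ} (hl : 0 < l) (hy : 0 < y) (t : ℝ) :
    exp (l * min t y) ≤ l * t + (1 + (exp (l * y) - 1 - l * y) / y ^ 2 * t ^ 2) := by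
  have hsq : min t y ^ 2 ≤ t ^ 2 := by
    rcases le_total t y with h | h
    · rw [min_eq_left h]
    · rw [min_eq_right h]
      gcongr
  have hquad := exp_le_one_add_add_mul_sq (mul_pos hl hy)
    (mul_le_mul_of_nonneg_left (min_le_right t y) hl.le)
  have hcoef : 0 ≤ (exp (l * y) - 1 - l * y) / y ^ 2 := exp_sub_one_sub_self_div_sq_nonneg _ y
  calc exp (l * min t y)
      ≤ 1 + l * min t y + (exp (l * y) - 1 - l * y) / (l * y) ^ 2 * (l * min t y) ^ 2 := hquad
    _ = l * min t y + (1 + (exp (l * y) - 1 - l * y) / y ^ 2 * min t y ^ 2) := by field_simp; ring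
    _ ≤ l * t + (1 + (exp (l * y) - 1 - l * y) / y ^ 2 * t ^ 2) := by
      gcongr
      exact min_le_left t y

lemma lipschitzOnWith_exp_Iic (b : ℝ) : LipschitzOnWith (exp b).toNNReal exp (Set.Iic b) := by
  refine (convex_Iic b).lipschitzOnWith_of_nnnorm_deriv_le
    (fun t _ => differentiableAt_exp) fun t ht => ?_
  rw [Real.deriv_exp, ← NNReal.coe_le_coe, coe_nnnorm, norm_of_nonneg (exp_pos t).le,
    Real.coe_toNNReal _ (exp_pos b).le]
  exact exp_le_exp.2 ht

lemma cubic_le_log_one_add_of_nonneg {u : ℝ} (hu : 0 ≤ u) :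
    2 * (u / (u + 2)) + 2 / 3 * (u / (u + 2)) ^ 3 ≤ log (1 + u) := by
  have h := sum_le_hasSum (Finset.range 2) (fun k _ => by positivity) (hasSum_log_one_add hu)
  norm_num [Finset.sum_range_succ] at h
  exact h

/-- Bennett's function `h(u) = (1 + u) log (1 + u) - u`, the rate in Bennett's inequality. -/
def bennett (u : ℝ) : ℝ := (1 + u) * log (1 + u) - u

lemma mul_log_sub_self_le_bennett {u : ℝ} (hu : 0 < u) : u * log u - u ≤ bennett u := by
  have hlog : log u ≤ log (1 + u) := log_le_log hu (by linarith)
  have hlog_nonneg : 0 ≤ log (1 + u) := log_nonneg (by linarith)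
  rw [bennett]
  linarith [mul_le_mul_of_nonneg_left hlog hu.le]

lemma le_bennett {u : ℝ} (hu : 0 ≤ u) :
    u ^ 2 / (2 * (1 + u)) * (1 + 2 / 3 * log (1 + u)) ≤ bennett u := by
  -- Solved for the logarithm, the claim is `(9u² + 6u) / (4u² + 12u + 6) ≤ log (1 + u)`.
  have hlog : 9 * u ^ 2 + 6 * u ≤ log (1 + u) * (4 * u ^ 2 + 12 * u + 6) :=
    calc 9 * u ^ 2 + 6 * u
        ≤ 9 * u ^ 2 + 6 * u + (5 * u ^ 5 + 12 * u ^ 4) / (3 * (u + 2) ^ 3) :=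
          le_add_of_nonneg_right (by positivity)
      _ = (2 * (u / (u + 2)) + 2 / 3 * (u / (u + 2)) ^ 3) * (4 * u ^ 2 + 12 * u + 6) := by
        field_simp
        ring
      _ ≤ log (1 + u) * (4 * u ^ 2 + 12 * u + 6) := by
        gcongr
        exact cubic_le_log_one_add_of_nonneg hu
  rw [bennett, div_mul_eq_mul_div, div_le_iff₀ (by positivity)]
  linarith

end RealInequalities

lemma sum_toReal_ereal_le {ι : Type*} {s : Finset ι} {f : ι → EReal} {b : ℝ} (hf : ∀ i ∈ s, 0 ≤ f i)
    (h : ∑ i ∈ s, f i ≤ b) : ∑ i ∈ s, (f i).toReal ≤ b := by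
  rw [← EReal.coe_le_coe_iff]
  calc ((∑ i ∈ s, (f i).toReal : ℝ) : EReal) = ∑ i ∈ s, ((f i).toReal : EReal) :=
        map_sum (⟨⟨Real.toEReal, EReal.coe_zero⟩, EReal.coe_add⟩ : ℝ →+ EReal) _ s
    _ ≤ ∑ i ∈ s, f i := Finset.sum_le_sum fun i hi =>
      EReal.coe_toReal_le (ne_bot_of_le_ne_bot EReal.zero_ne_bot (hf i hi))
    _ ≤ b := h

namespace SublinearExp

section Basic

variable {Ω : Type} (SL : SublinearExp Ω)

lemma E_nonneg {X : Ω → ℝ} (hX : ∀ ω, 0 ≤ X ω) : 0 ≤ SL.E X := by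
  simpa [SL.const_eq] using SL.mono (fun _ => 0) X hX

lemma E_sum_le {ι : Type*} (s : Finset ι) (X : ι → Ω → ℝ) :
    SL.E (fun ω => ∑ i ∈ s, X i ω) ≤ ∑ i ∈ s, SL.E (X i) := by
  have h := Finset.le_sum_of_subadditive SL.E (SL.const_eq 0).le SL.subadd s X
  rwa [Finset.sum_fn] at h

lemma cE_mono {X Y : Ω → ℝ} (h : ∀ ω, X ω ≤ Y ω) : SL.cE X ≤ SL.cE Y :=
  EReal.neg_le_neg_iff.2 (SL.mono _ _ fun ω => neg_le_neg (h ω))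

lemma cE_const (c : ℝ) : SL.cE (fun _ => c) = c := by
  rw [cE, SL.const_eq, EReal.coe_neg, neg_neg]

lemma cE_nonneg {X : Ω → ℝ} (hX : ∀ ω, 0 ≤ X ω) : 0 ≤ SL.cE X := by
  simpa [SL.cE_const] using SL.cE_mono (X := fun _ => 0) hX

lemma cE_const_mul {c : ℝ} (hc : 0 ≤ c) (X : Ω → ℝ) :
    SL.cE (fun ω => c * X ω) = c * SL.cE X := by
  rw [cE, cE, mul_neg, ← SL.pos_homog c hc]
  simp only [mul_neg]

-- The bound `r` is real because `⊤ + ⊥ = ⊥` in `EReal`.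
lemma cE_add_le {X Y : Ω → ℝ} {r : ℝ} (hY : SL.E Y ≤ r) :
    SL.cE (fun ω => X ω + Y ω) ≤ SL.cE X + r := by
  have h : SL.E (fun ω => -X ω) ≤ SL.E (fun ω => -(X ω + Y ω)) + r :=
    calc SL.E (fun ω => -X ω) = SL.E (fun ω => -(X ω + Y ω) + Y ω) := by
          simp only [neg_add, neg_add_cancel_right]
      _ ≤ SL.E (fun ω => -(X ω + Y ω)) + SL.E Y := SL.subadd _ _
      _ ≤ SL.E (fun ω => -(X ω + Y ω)) + r := by gcongr
  calc SL.cE (fun ω => X ω + Y ω) ≤ -(SL.E (fun ω => -X ω) - r) :=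
        EReal.neg_le_neg_iff.2 (EReal.sub_le_of_le_add h)
    _ = SL.cE X + r :=
      EReal.neg_sub (.inr (EReal.coe_ne_bot r)) (.inr (EReal.coe_ne_top r))

lemma coe_V (A : Set Ω) : (SL.V A : EReal) = SL.E (A.indicator fun _ => 1) := by
  have hnonneg : 0 ≤ SL.E (A.indicator fun _ => 1) :=
    SL.E_nonneg fun ω => Set.indicator_nonneg (fun _ _ => zero_le_one) ω
  have hle_one : SL.E (A.indicator fun _ => 1) ≤ (1 : ℝ) :=
    (SL.mono _ _ fun ω => Set.indicator_le_self' (fun _ _ => zero_le_one) ω).trans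
      (SL.const_eq 1).le
  have hcoe := EReal.coe_toReal (ne_top_of_le_ne_top (EReal.coe_ne_top 1) hle_one)
    (ne_bot_of_le_ne_bot EReal.zero_ne_bot hnonneg)
  rw [← hcoe, EReal.coe_eq_coe_iff]
  refine IsLeast.csInf_eq ⟨⟨_, fun _ => le_rfl, hcoe.symm⟩, ?_⟩
  rintro x ⟨ξ, hξ, hx⟩
  rw [← EReal.coe_le_coe_iff, hcoe, ← hx]
  exact SL.mono _ _ hξ

lemma coe_vLow_le (A : Set Ω) : (SL.vLow A : EReal) ≤ SL.cE (A.indicator fun _ => 1) := by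
  rw [cE, EReal.le_neg, ← EReal.coe_neg, vLow]
  calc SL.E (fun ω => -A.indicator (fun _ => 1) ω)
      = SL.E (fun ω => Aᶜ.indicator (fun _ => 1) ω + -1) := by
        congr 1 with ω
        by_cases h : ω ∈ A <;> simp [h]
    _ ≤ SL.E (Aᶜ.indicator fun _ => 1) + SL.E (fun _ => -1) := SL.subadd _ _
    _ = ((-(1 - SL.V Aᶜ) : ℝ) : EReal) := by
      rw [← SL.coe_V, SL.const_eq, ← EReal.coe_add, neg_sub, sub_eq_add_neg]

lemma vLow_le_V_add {A D : Set Ω} {Z : Ω → ℝ} {r : ℝ} (hZ : ∀ ω, 0 ≤ Z ω)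
    (hAD : ∀ ω ∈ A, ω ∉ D → 1 ≤ Z ω) (hr : SL.cE Z ≤ r) : SL.vLow A ≤ SL.V D + r := by
  have hcover (ω : Ω) : A.indicator (fun _ => (1 : ℝ)) ω ≤ Z ω + D.indicator (fun _ => 1) ω := by
    by_cases hA : ω ∈ A <;> by_cases hD : ω ∈ D <;> simp [hA, hD, hZ, hAD, add_nonneg]
  rw [← EReal.coe_le_coe_iff]
  calc (SL.vLow A : EReal) ≤ SL.cE (A.indicator fun _ => 1) := SL.coe_vLow_le A
    _ ≤ SL.cE (fun ω => Z ω + D.indicator (fun _ => 1) ω) := SL.cE_mono hcover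
    _ ≤ SL.cE Z + SL.V D := SL.cE_add_le (SL.coe_V D).ge
    _ ≤ r + SL.V D := by gcongr
    _ = ((SL.V D + r : ℝ) : EReal) := by rw [add_comm, EReal.coe_add]

lemma isBLip_exp_mul_min {l : ℝ} (hl : 0 ≤ l) (y : ℝ) : IsBLip fun t => Real.exp (l * min t y) := by
  have hmaps (t : ℝ) : l * min t y ≤ l * y := mul_le_mul_of_nonneg_left (min_le_right t y) hl
  refine ⟨⟨_, lipschitzOnWith_univ.1 ((lipschitzOnWith_exp_Iic (l * y)).comp
    ((lipschitzWith_smul l).comp (LipschitzWith.id.min_const y)).lipschitzOnWith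
    fun t _ => hmaps t)⟩, Real.exp (l * y), fun t => ?_⟩
  rw [abs_of_pos (Real.exp_pos _)]
  exact Real.exp_le_exp.2 (hmaps t)

lemma cE_exp_mul_min_le {X : Ω → ℝ} {σ l y : ℝ} (hl : 0 < l) (hy : 0 < y) (hmean : SL.cE X ≤ 0)
    (hσ : SL.E (fun ω => X ω ^ 2) ≤ σ) :
    SL.cE (fun ω => Real.exp (l * min (X ω) y)) ≤
      Real.exp ((Real.exp (l * y) - 1 - l * y) / y ^ 2 * σ) := by
  set c : ℝ := (Real.exp (l * y) - 1 - l * y) / y ^ 2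
  have hc : 0 ≤ c := exp_sub_one_sub_self_div_sq_nonneg _ y
  have hquad : SL.E (fun ω => 1 + c * X ω ^ 2) ≤ (1 + c * σ : ℝ) :=
    calc SL.E (fun ω => 1 + c * X ω ^ 2) ≤ SL.E (fun _ => 1) + SL.E (fun ω => c * X ω ^ 2) :=
          SL.subadd _ _
      _ = (1 : ℝ) + c * SL.E (fun ω => X ω ^ 2) := by rw [SL.const_eq, SL.pos_homog c hc]
      _ ≤ (1 : ℝ) + c * σ := by gcongr
      _ = (1 + c * σ : ℝ) := by rw [EReal.coe_add, EReal.coe_mul]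
  calc SL.cE (fun ω => Real.exp (l * min (X ω) y))
      ≤ SL.cE (fun ω => l * X ω + (1 + c * X ω ^ 2)) := SL.cE_mono fun ω => exp_mul_min_le hl hy _
    _ ≤ SL.cE (fun ω => l * X ω) + (1 + c * σ : ℝ) := SL.cE_add_le hquad
    _ = l * SL.cE X + (1 + c * σ : ℝ) := by rw [SL.cE_const_mul hl.le]
    _ ≤ 0 + (1 + c * σ : ℝ) := by
      gcongr
      exact mul_nonpos_of_nonneg_of_nonpos (by exact_mod_cast hl.le) hmean
    _ ≤ Real.exp (c * σ) := by
      rw [zero_add, EReal.coe_le_coe_iff, add_comm]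
      exact Real.add_one_le_exp _

end Basic

section TailBounds

variable {Ω : Type} {SL : SublinearExp Ω} {B : ℝ}

section SecondMoments

variable {ι : Type*} [Fintype ι] {X : ι → Ω → ℝ}

lemma nonneg_of_sum_E_sq_le (hB : ∑ k, SL.E (fun ω => X k ω ^ 2) ≤ B) : 0 ≤ B := by
  rw [← EReal.coe_nonneg]
  exact (Finset.sum_nonneg fun k _ => SL.E_nonneg fun ω => sq_nonneg (X k ω)).trans hB

lemma V_exists_ge_le (hB : ∑ k, SL.E (fun ω => X k ω ^ 2) ≤ B) {y : ℝ} (hy : 0 < y) :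
    SL.V {ω | ∃ k, y ≤ X k ω} ≤ B / y ^ 2 := by
  have hy2 : 0 ≤ (y ^ 2)⁻¹ := by positivity
  have hmarkov (ω : Ω) : {ω | ∃ k, y ≤ X k ω}.indicator (fun _ => (1 : ℝ)) ω ≤
      (y ^ 2)⁻¹ * ∑ k, X k ω ^ 2 := by
    refine Set.indicator_apply_le' (fun ⟨k, hk⟩ => ?_) fun _ => by positivity
    rw [inv_mul_eq_div, one_le_div (by positivity)]
    calc y ^ 2 ≤ X k ω ^ 2 := by gcongr
      _ ≤ ∑ k, X k ω ^ 2 :=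
        Finset.single_le_sum (f := fun k => X k ω ^ 2) (fun _ _ => sq_nonneg _) (Finset.mem_univ k)
  rw [← EReal.coe_le_coe_iff, SL.coe_V]
  calc SL.E ({ω | ∃ k, y ≤ X k ω}.indicator fun _ => 1)
      ≤ SL.E (fun ω => (y ^ 2)⁻¹ * ∑ k, X k ω ^ 2) := SL.mono _ _ hmarkov
    _ = ((y ^ 2)⁻¹ : ℝ) * SL.E (fun ω => ∑ k, X k ω ^ 2) := SL.pos_homog _ hy2 _
    _ ≤ ((y ^ 2)⁻¹ : ℝ) * B := mul_le_mul_of_nonneg_left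
      ((SL.E_sum_le Finset.univ fun k ω => X k ω ^ 2).trans hB) (by exact_mod_cast hy2)
    _ = (B / y ^ 2 : ℝ) := by rw [← EReal.coe_mul, inv_mul_eq_div]

lemma prod_cE_exp_mul_min_le (hmean : ∀ k, SL.cE (X k) ≤ 0)
    (hB : ∑ k, SL.E (fun ω => X k ω ^ 2) ≤ B) {l y : ℝ} (hl : 0 < l) (hy : 0 < y) :
    ∏ k, (SL.cE fun ω => Real.exp (l * min (X k ω) y)).toReal ≤
      Real.exp ((Real.exp (l * y) - 1 - l * y) / y ^ 2 * B) := by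
  set c : ℝ := (Real.exp (l * y) - 1 - l * y) / y ^ 2
  set σ : ι → ℝ := fun k => (SL.E fun ω => X k ω ^ 2).toReal
  have hc : 0 ≤ c := exp_sub_one_sub_self_div_sq_nonneg _ y
  have hsq_nonneg (k : ι) : 0 ≤ SL.E fun ω => X k ω ^ 2 := SL.E_nonneg fun ω => sq_nonneg _
  have hsq_le (k : ι) : SL.E (fun ω => X k ω ^ 2) ≤ σ k := by
    refine EReal.le_coe_toReal (ne_top_of_le_ne_top (EReal.coe_ne_top B) (le_trans ?_ hB))
    exact Finset.single_le_sum (fun k _ => hsq_nonneg k) (Finset.mem_univ k)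
  have hexp_nonneg (k : ι) : 0 ≤ SL.cE fun ω => Real.exp (l * min (X k ω) y) :=
    SL.cE_nonneg fun ω => (Real.exp_pos _).le
  have hfactor (k : ι) :
      (SL.cE fun ω => Real.exp (l * min (X k ω) y)).toReal ≤ Real.exp (c * σ k) :=
    EReal.toReal_le_toReal (SL.cE_exp_mul_min_le hl hy (hmean k) (hsq_le k))
      (ne_bot_of_le_ne_bot EReal.zero_ne_bot (hexp_nonneg k)) (EReal.coe_ne_top _)
  calc ∏ k, (SL.cE fun ω => Real.exp (l * min (X k ω) y)).toReal
      ≤ ∏ k, Real.exp (c * σ k) :=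
        Finset.prod_le_prod (fun k _ => EReal.toReal_nonneg (hexp_nonneg k)) fun k _ => hfactor k
    _ = Real.exp (c * ∑ k, σ k) := by rw [← Real.exp_sum, Finset.mul_sum]
    _ ≤ Real.exp (c * B) := by
      gcongr
      exact sum_toReal_ereal_le (fun k _ => hsq_nonneg k) hB

end SecondMoments

variable {n : ℕ} {X : Fin n → Ω → ℝ} {K : ℝ}

lemma UENDFinConj.cE_prod_exp_mul_min_le (hX : UENDFinConj SL K X) (hK : 0 ≤ K)
    (hmean : ∀ k, SL.cE (X k) ≤ 0) (hB : ∑ k, SL.E (fun ω => X k ω ^ 2) ≤ B) {l y : ℝ}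
    (hl : 0 < l) (hy : 0 < y) :
    SL.cE (fun ω => ∏ k, Real.exp (l * min (X k ω) y)) ≤
      (K * Real.exp ((Real.exp (l * y) - 1 - l * y) / y ^ 2 * B) : ℝ) := by
  refine (hX (fun _ t => Real.exp (l * min t y)) (fun _ => isBLip_exp_mul_min hl.le y)
    (fun _ s t hst => Real.exp_le_exp.2 (mul_le_mul_of_nonneg_left (min_le_min_right y hst) hl.le))
    fun _ _ => (Real.exp_pos _).le).trans ?_
  rw [EReal.coe_le_coe_iff]
  exact mul_le_mul_of_nonneg_left (prod_cE_exp_mul_min_le hmean hB hl hy) hK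

lemma UENDFinConj.vLow_le_chernoff (hX : UENDFinConj SL K X) (hK : 0 ≤ K)
    (hmean : ∀ k, SL.cE (X k) ≤ 0) (hB : ∑ k, SL.E (fun ω => X k ω ^ 2) ≤ B) (x : ℝ) {l y : ℝ}
    (hl : 0 < l) (hy : 0 < y) :
    SL.vLow {ω | x ≤ ∑ k, X k ω} ≤ SL.V {ω | ∃ k, y ≤ X k ω} +
      K * Real.exp (-(l * x) + (Real.exp (l * y) - 1 - l * y) / y ^ 2 * B) := by
  refine SL.vLow_le_V_add
    (Z := fun ω => Real.exp (-(l * x)) * ∏ k, Real.exp (l * min (X k ω) y))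
    (fun ω => by positivity) (fun ω hA hD => ?_) ?_
  · have hmin (k : Fin n) : min (X k ω) y = X k ω :=
      min_eq_left (le_of_not_ge fun hk => hD ⟨k, hk⟩)
    simp only [hmin]
    rw [← Real.exp_sum, ← Real.exp_add, ← Finset.mul_sum]
    exact Real.one_le_exp (by linarith [mul_le_mul_of_nonneg_left hA.out hl.le])
  · rw [SL.cE_const_mul (Real.exp_pos _).le, Real.exp_add, mul_left_comm, EReal.coe_mul]
    exact mul_le_mul_of_nonneg_left (hX.cE_prod_exp_mul_min_le hK hmean hB hl hy)
      (by exact_mod_cast (Real.exp_pos _).le)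

lemma UENDFinConj.vLow_le_bennett (hX : UENDFinConj SL K X) (hK : 0 ≤ K)
    (hmean : ∀ k, SL.cE (X k) ≤ 0) (hB : ∑ k, SL.E (fun ω => X k ω ^ 2) ≤ B) (hB0 : 0 < B)
    {x y : ℝ} (hx : 0 < x) (hy : 0 < y) :
    SL.vLow {ω | x ≤ ∑ k, X k ω} ≤ SL.V {ω | ∃ k, y ≤ X k ω} +
      K * Real.exp (-(B / y ^ 2 * bennett (x * y / B))) := by
  have hu : 0 < x * y / B := by positivity
  -- `l = log (1 + x * y / B) / y` minimizes the exponent of the Chernoff bound.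
  have hl : 0 < Real.log (1 + x * y / B) / y := div_pos (Real.log_pos (by linarith)) hy
  have h := hX.vLow_le_chernoff hK hmean hB x hl hy
  rw [div_mul_cancel₀ _ hy.ne', Real.exp_log (by positivity)] at h
  convert h using 4
  rw [bennett]
  field_simp
  ring

lemma UENDFinConj.vLow_le_fukNagaev (hX : UENDFinConj SL K X) (hK : 0 ≤ K)
    (hmean : ∀ k, SL.cE (X k) ≤ 0) (hB : ∑ k, SL.E (fun ω => X k ω ^ 2) ≤ B) (hB0 : 0 < B)
    {x y : ℝ} (hx : 0 < x) (hy : 0 < y) :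
    SL.vLow {ω | x ≤ ∑ k, X k ω} ≤ SL.V {ω | ∃ k, y ≤ X k ω} +
      K * Real.exp (-(x ^ 2 / (2 * (x * y + B))) *
        (1 + (2 / 3) * Real.log (1 + x * y / B))) := by
  refine (hX.vLow_le_bennett hK hmean hB hB0 hx hy).trans ?_
  gcongr
  rw [neg_mul, neg_le_neg_iff]
  calc x ^ 2 / (2 * (x * y + B)) * (1 + 2 / 3 * Real.log (1 + x * y / B))
      = B / y ^ 2 * ((x * y / B) ^ 2 / (2 * (1 + x * y / B)) *
          (1 + 2 / 3 * Real.log (1 + x * y / B))) := by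
        rw [← mul_assoc]
        congr 1
        field_simp
        ring
    _ ≤ B / y ^ 2 * bennett (x * y / B) := by
      gcongr
      exact le_bennett (by positivity)

lemma UENDFinConj.vLow_le_mul_div_sq_of_pos (hX : UENDFinConj SL K X) (hK : 0 ≤ K)
    (hmean : ∀ k, SL.cE (X k) ≤ 0) (hB : ∑ k, SL.E (fun ω => X k ω ^ 2) ≤ B) (hB0 : 0 < B)
    {x : ℝ} (hx : 0 < x) :
    SL.vLow {ω | x ≤ ∑ k, X k ω} ≤ (1 + K * Real.exp 1) * (B / x ^ 2) := by
  have hu : 0 < x * x / B := by positivity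
  have hexp : Real.exp (-(B / x ^ 2 * bennett (x * x / B))) ≤ Real.exp 1 * (B / x ^ 2) :=
    calc Real.exp (-(B / x ^ 2 * bennett (x * x / B)))
        ≤ Real.exp (-(B / x ^ 2 * (x * x / B * Real.log (x * x / B) - x * x / B))) := by
          gcongr
          exact mul_log_sub_self_le_bennett hu
      _ = Real.exp (1 - Real.log (x * x / B)) := by
        congr 1
        field_simp
        ring
      _ = Real.exp 1 * (B / x ^ 2) := by
        rw [Real.exp_sub, Real.exp_log hu, div_eq_mul_inv, inv_div, sq]
  calc SL.vLow {ω | x ≤ ∑ k, X k ω}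
      ≤ SL.V {ω | ∃ k, x ≤ X k ω} + K * Real.exp (-(B / x ^ 2 * bennett (x * x / B))) :=
        hX.vLow_le_bennett hK hmean hB hB0 hx hx
    _ ≤ B / x ^ 2 + K * (Real.exp 1 * (B / x ^ 2)) := by
      gcongr
      exact V_exists_ge_le hB hx
    _ = (1 + K * Real.exp 1) * (B / x ^ 2) := by ring

lemma UENDFinConj.vLow_le_mul_div_sq (hX : UENDFinConj SL K X) (hK : 0 ≤ K)
    (hmean : ∀ k, SL.cE (X k) ≤ 0) (hB : ∑ k, SL.E (fun ω => X k ω ^ 2) ≤ B)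
    {x : ℝ} (hx : 0 < x) :
    SL.vLow {ω | x ≤ ∑ k, X k ω} ≤ (1 + K * Real.exp 1) * (B / x ^ 2) := by
  -- Passing to the limit `b ↓ B` covers `B = 0`.
  have hlim : Tendsto (fun b : ℝ => (1 + K * Real.exp 1) * (b / x ^ 2)) (nhdsWithin B (Set.Ioi B))
      (nhds ((1 + K * Real.exp 1) * (B / x ^ 2))) :=
    tendsto_nhdsWithin_of_tendsto_nhds (Continuous.tendsto (by fun_prop) B)
  refine ge_of_tendsto hlim (eventually_mem_nhdsWithin.mono fun b hb => ?_)
  have hBb : B < b := hb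
  exact hX.vLow_le_mul_div_sq_of_pos hK hmean (hB.trans (EReal.coe_le_coe_iff.2 hBb.le))
    ((nonneg_of_sum_E_sq_le hB).trans_lt hBb) hx

end TailBounds

end SublinearExp

/-- Lemma 4.8 (a) and (c): tail inequalities for the lower capacity, for random
variables that are upper extended negatively dependent under the conjugate
expectation `ℰ`, with `ℰ[X_k] ≤ 0`. -/
theorem stmt16 {Ω : Type} (SL : SublinearExp Ω) (n : ℕ) (X : Fin n → Ω → ℝ)
    (K : ℝ) (hK : 1 ≤ K)
    (hUENDconj : SublinearExp.UENDFinConj SL K X)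
    (hmean : ∀ k, SL.cE (X k) ≤ 0)
    (B : ℝ) (hB : (B : EReal) = ∑ k, SL.E fun ω => (X k ω) ^ 2) :
    (∀ x y : ℝ, 0 < x → 0 < y →
      SL.vLow {ω | x ≤ ∑ k, X k ω} ≤
        SL.V {ω | ∃ k, y ≤ X k ω} +
          K * Real.exp (-(x ^ 2 / (2 * (x * y + B))) *
            (1 + (2 / 3) * Real.log (1 + x * y / B)))) ∧
    (∀ x : ℝ, 0 < x →
      SL.vLow {ω | x ≤ ∑ k, X k ω} ≤ (1 + K * Real.exp 1) * (B / x ^ 2)) := by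
  have hK0 : 0 ≤ K := zero_le_one.trans hK
  refine ⟨fun x y hx hy => ?_, fun x hx => hUENDconj.vLow_le_mul_div_sq hK0 hmean hB.ge hx⟩
  rcases (SublinearExp.nonneg_of_sum_E_sq_le hB.ge).eq_or_lt with rfl | hB0
  · -- With `x * y / 0 = 0` the bound reads `exp (-x / (2 * y))`: Chernoff for `l = 1 / (2 * y)`.
    convert hUENDconj.vLow_le_chernoff hK0 hmean hB.ge x (l := 1 / (2 * y)) (by positivity) hy
      using 4
    simp only [div_zero, add_zero, Real.log_one, mul_zero, mul_one]
    field_simp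
  · exact hUENDconj.vLow_le_fukNagaev hK0 hmean hB.ge hB0 hx hy
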